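/- Let L > 0 and T > 0 (Kato smoothing effect). If z is a classical solution of the linearized KdV system on [0,T] with initial datum z₀ = z(0,·), then the space-time H¹ norm of z satisfies ‖z‖_{L²(0,T;H¹(0,L))} ≤ ((4T + L)/3)^{1/2} ‖z₀‖_{L²(0,L)}. -/

import Mathlib

open Set Real MeasureTheory

/-- The `L²(0,L)` norm of a function on `(0,L)`. -/
noncomputable def L2norm (L : ℝ) (f : ℝ → ℝ) : ℝ :=
  Real.sqrt (∫ x in (0:ℝ)..L, (f x) ^ 2)

/-- A classical solution of the linearized KdV system
`z_t + z_x + z_xxx = 0`, `z(t,0) = z(t,L) = z_x(t,L) = 0`, on `[0,T] × [0,L]`. -/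
def IsLinearKdVSol (L T : ℝ) (z : ℝ → ℝ → ℝ) : Prop :=
  (∀ t ∈ Icc (0:ℝ) T, ContDiffOn ℝ 3 (z t) (Icc (0:ℝ) L)) ∧
  (∀ x ∈ Icc (0:ℝ) L, ContDiffOn ℝ 1 (fun s => z s x) (Icc (0:ℝ) T)) ∧
  ContinuousOn (fun p : ℝ × ℝ => z p.1 p.2) (Icc (0:ℝ) T ×ˢ Icc (0:ℝ) L) ∧
  (∀ t ∈ Ioo (0:ℝ) T, ∀ x ∈ Ioo (0:ℝ) L,
    derivWithin (fun s => z s x) (Icc (0:ℝ) T) t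
      + derivWithin (z t) (Icc (0:ℝ) L) x
      + iteratedDerivWithin 3 (z t) (Icc (0:ℝ) L) x = 0) ∧
  (∀ t ∈ Icc (0:ℝ) T,
    z t 0 = 0 ∧ z t L = 0 ∧ derivWithin (z t) (Icc (0:ℝ) L) L = 0)


/-- `v` (with derivatives `v1, v2, v3`) lies in the domain of the spatial KdV operator. -/
structure KdVDom (L : ℝ) (v v1 v2 v3 : ℝ → ℝ) : Prop where
  c0 : ContinuousOn v (Icc 0 L)
  c1 : ContinuousOn v1 (Icc 0 L)
  c2 : ContinuousOn v2 (Icc 0 L)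
  c3 : ContinuousOn v3 (Icc 0 L)
  d0 : ∀ x ∈ Ioo 0 L, HasDerivAt v (v1 x) x
  d1 : ∀ x ∈ Ioo 0 L, HasDerivAt v1 (v2 x) x
  d2 : ∀ x ∈ Ioo 0 L, HasDerivAt v2 (v3 x) x
  b0 : v 0 = 0
  bL : v L = 0
  bL1 : v1 L = 0

lemma KdVDom.sub {L : ℝ} {v v1 v2 v3 u u1 u2 u3 : ℝ → ℝ} (hv : KdVDom L v v1 v2 v3)
    (hu : KdVDom L u u1 u2 u3) :
    KdVDom L (fun x => v x - u x) (fun x => v1 x - u1 x) (fun x => v2 x - u2 x)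
      (fun x => v3 x - u3 x) where
  c0 := hv.c0.sub hu.c0
  c1 := hv.c1.sub hu.c1
  c2 := hv.c2.sub hu.c2
  c3 := hv.c3.sub hu.c3
  d0 := fun x hx => (hv.d0 x hx).sub (hu.d0 x hx)
  d1 := fun x hx => (hv.d1 x hx).sub (hu.d1 x hx)
  d2 := fun x hx => (hv.d2 x hx).sub (hu.d2 x hx)
  b0 := by simp [hv.b0, hu.b0]
  bL := by simp [hv.bL, hu.bL]
  bL1 := by simp [hv.bL1, hu.bL1]

lemma ii_of_cont {L : ℝ} (hL : 0 ≤ L) {f : ℝ → ℝ} (hf : ContinuousOn f (Icc 0 L)) :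
    IntervalIntegrable f volume 0 L := by
  apply ContinuousOn.intervalIntegrable
  rwa [uIcc_of_le hL]

lemma KdVDom.diss {L : ℝ} (hL : 0 ≤ L) {v v1 v2 v3 : ℝ → ℝ} (h : KdVDom L v v1 v2 v3) :
    ∫ x in (0:ℝ)..L, v x * (v1 x + v3 x) = (v1 0) ^ 2 / 2 := by
  obtain ⟨c0, c1, c2, c3, d0, d1, d2, b0, bL, bL1⟩ := h
  rw [intervalIntegral.integral_eq_sub_of_hasDerivAt_of_le hL
    (f := fun x => v x ^ 2 / 2 + v x * v2 x - v1 x ^ 2 / 2)]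
  · simp [b0, bL, bL1]
  · fun_prop
  · intro x hx
    have := (((d0 x hx).pow 2).div_const 2).add ((d0 x hx).mul (d2 x hx)) |>.sub
      (((d1 x hx).pow 2).div_const 2)
    refine this.congr_deriv ?_
    push_cast; ring
  · exact ii_of_cont hL (by fun_prop)

lemma KdVDom.kato {L : ℝ} (hL : 0 ≤ L) {v v1 v2 v3 : ℝ → ℝ} (h : KdVDom L v v1 v2 v3) :
    ∫ x in (0:ℝ)..L, (x * (v x * (v1 x + v3 x)) + v x ^ 2 / 2 - 3 / 2 * v1 x ^ 2) = 0 := by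
  obtain ⟨c0, c1, c2, c3, d0, d1, d2, b0, bL, bL1⟩ := h
  rw [intervalIntegral.integral_eq_sub_of_hasDerivAt_of_le hL
    (f := fun x => x * (v x ^ 2 / 2 + v x * v2 x - v1 x ^ 2 / 2) - v x * v1 x)]
  · simp [b0, bL, bL1]
  · fun_prop
  · intro x hx
    have := ((hasDerivAt_id x).mul ((((d0 x hx).pow 2).div_const 2).add
      ((d0 x hx).mul (d2 x hx)) |>.sub (((d1 x hx).pow 2).div_const 2))).sub
      ((d0 x hx).mul (d1 x hx))
    refine this.congr_deriv ?_
    simp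
    ring
  · exact ii_of_cont hL (by fun_prop)

lemma KdVDom.test {L : ℝ} (hL : 0 ≤ L) {v v1 v2 v3 : ℝ → ℝ} (h : KdVDom L v v1 v2 v3)
    {p p1 p2 p3 : ℝ → ℝ} (e0 : ∀ x, HasDerivAt p (p1 x) x) (e1 : ∀ x, HasDerivAt p1 (p2 x) x)
    (e2 : ∀ x, HasDerivAt p2 (p3 x) x) (e3 : Continuous p3)
    (z0 : p 0 = 0) (zL : p L = 0) (z01 : p1 0 = 0) :
    ∫ x in (0:ℝ)..L, v x * (p1 x + p3 x) = - ∫ x in (0:ℝ)..L, (v1 x + v3 x) * p x := by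
  obtain ⟨c0, c1, c2, c3, d0, d1, d2, b0, bL, bL1⟩ := h
  have k0 : Continuous p := continuous_iff_continuousAt.2 fun x => (e0 x).continuousAt
  have k1 : Continuous p1 := continuous_iff_continuousAt.2 fun x => (e1 x).continuousAt
  have k2 : Continuous p2 := continuous_iff_continuousAt.2 fun x => (e2 x).continuousAt
  rw [eq_neg_iff_add_eq_zero, ← intervalIntegral.integral_add (ii_of_cont hL (by fun_prop))
    (ii_of_cont hL (by fun_prop))]
  rw [intervalIntegral.integral_eq_sub_of_hasDerivAt_of_le hL
    (f := fun x => v x * p x + v x * p2 x - v1 x * p1 x + v2 x * p x)]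
  · simp [b0, bL, bL1, z0, zL, z01]
  · fun_prop
  · intro x hx
    have := ((((d0 x hx).mul (e0 x)).add ((d0 x hx).mul (e2 x))).sub
      ((d1 x hx).mul (e1 x))).add ((d2 x hx).mul (e0 x))
    refine this.congr_deriv ?_
    ring
  · exact ii_of_cont hL (by fun_prop)

lemma int_Ioo {L : ℝ} (hL : 0 ≤ L) (f : ℝ → ℝ) :
    ∫ x in (0:ℝ)..L, f x = ∫ x in Ioo 0 L, f x := by
  rw [intervalIntegral.integral_of_le hL, integral_Ioc_eq_integral_Ioo]

lemma kdv_fub {L s t C : ℝ} (hL : 0 ≤ L) (hst : s ≤ t) {Y Yt : ℝ → ℝ → ℝ}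
    (hY : Continuous (Function.uncurry Y))
    (hd : ∀ r ∈ Icc s t, ∀ x ∈ Ioo 0 L, HasDerivAt (fun r => Y r x) (Yt r x) r)
    (hc : ∀ x ∈ Ioo 0 L, ContinuousOn (fun r => Yt r x) (Icc s t))
    (hx : ∀ r ∈ Icc s t, ContinuousOn (Yt r) (Icc 0 L))
    (hb : ∀ r ∈ Icc s t, ∫ x in (0:ℝ)..L, (Yt r x) ^ 2 ≤ C)
    {ψ : ℝ → ℝ} (hψ : Continuous ψ) :
    IntervalIntegrable (fun r => ∫ x in (0:ℝ)..L, ψ x * (2 * Y r x * Yt r x)) volume s t ∧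
    ∫ r in s..t, ∫ x in (0:ℝ)..L, ψ x * (2 * Y r x * Yt r x) =
      (∫ x in (0:ℝ)..L, ψ x * (Y t x) ^ 2) - ∫ x in (0:ℝ)..L, ψ x * (Y s x) ^ 2 := by
  have hYr : ∀ r, Continuous (Y r) := fun r => hY.comp (by fun_prop : Continuous fun x => (r, x))
  have hYx : ∀ x, Continuous (fun r => Y r x) :=
    fun x => hY.comp (by fun_prop : Continuous fun r => (r, x))
  -- bound
  obtain ⟨B, hB⟩ : ∃ B, ∀ p ∈ Icc s t ×ˢ Icc 0 L, ‖ψ p.2 * (2 * Y p.1 p.2)‖ ≤ B := by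
    apply (isCompact_Icc.prod isCompact_Icc).exists_bound_of_continuousOn
    have : Continuous fun p : ℝ × ℝ => Y p.1 p.2 := hY
    fun_prop
  have hB0 : 0 ≤ B := (norm_nonneg _).trans (hB (s, 0) ⟨⟨le_rfl, hst⟩, ⟨le_rfl, hL⟩⟩)
  have hmeas : AEStronglyMeasurable (fun p : ℝ × ℝ => ψ p.2 * (2 * Y p.1 p.2 * Yt p.1 p.2))
      ((volume.restrict (Ioc s t)).prod (volume.restrict (Ioo 0 L))) := by
    have hm : Measurable (fun p : ℝ × ℝ => ψ p.2 *
        (2 * Y p.1 p.2 * deriv (fun r => Y r p.2) p.1)) := by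
      have h1 : Measurable (fun p : ℝ × ℝ => deriv (fun r => Y r p.1) p.2) :=
        measurable_deriv_with_param (f := fun x r => Y r x)
          (hY.comp (by fun_prop : Continuous fun p : ℝ × ℝ => (p.2, p.1)))
      have h2 : Measurable (fun p : ℝ × ℝ => deriv (fun r => Y r p.2) p.1) :=
        h1.comp (measurable_snd.prodMk measurable_fst)
      have h3 : Measurable fun p : ℝ × ℝ => Y p.1 p.2 := hY.measurable
      have h4 : Measurable fun p : ℝ × ℝ => ψ p.2 := hψ.measurable.comp measurable_snd
      exact h4.mul ((h3.const_mul 2).mul h2)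
    refine hm.aestronglyMeasurable.congr ?_
    rw [Measure.prod_restrict]
    refine (ae_restrict_iff' (measurableSet_Ioc.prod measurableSet_Ioo)).2 (.of_forall ?_)
    rintro ⟨r, x⟩ ⟨hr, hx'⟩
    simp only at hr hx' ⊢
    rw [(hd r ⟨hr.1.le, hr.2⟩ x hx').deriv]
  have hYtint : ∀ r ∈ Icc s t, IntervalIntegrable (fun x => (Yt r x) ^ 2) volume 0 L :=
    fun r hr => ii_of_cont hL ((hx r hr).pow 2)
  have hprodInt : Integrable (fun p : ℝ × ℝ => ψ p.2 * (2 * Y p.1 p.2 * Yt p.1 p.2))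
      ((volume.restrict (Ioc s t)).prod (volume.restrict (Ioo 0 L))) := by
    rw [integrable_prod_iff hmeas]
    have hI : ∀ r ∈ Icc s t, IntervalIntegrable
        (fun x => ψ x * (2 * Y r x * Yt r x)) volume 0 L := by
      intro r hr
      have := hx r hr
      have := hYr r
      exact ii_of_cont hL (by fun_prop)
    constructor
    · refine (ae_restrict_iff' measurableSet_Ioc).2 (.of_forall fun r hr => ?_)
      have := hI r ⟨hr.1.le, hr.2⟩
      rw [intervalIntegrable_iff_integrableOn_Ioo_of_le hL] at this
      exact this
    · refine Integrable.mono' (g := fun _ => B * (L + C)) ?_ hmeas.norm.integral_prod_right' ?_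
      · exact integrable_const _
      · refine (ae_restrict_iff' measurableSet_Ioc).2 (.of_forall fun r hr => ?_)
        have hr' : r ∈ Icc s t := ⟨hr.1.le, hr.2⟩
        rw [Real.norm_of_nonneg (integral_nonneg fun _ => norm_nonneg _), ← int_Ioo hL
          (fun y => ‖ψ y * (2 * Y r y * Yt r y)‖)]
        calc ∫ x in (0:ℝ)..L, ‖ψ x * (2 * Y r x * Yt r x)‖
            ≤ ∫ x in (0:ℝ)..L, B * (1 + (Yt r x) ^ 2) := by
              refine intervalIntegral.integral_mono_on hL (hI r hr').norm ?_ ?_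
              · exact (intervalIntegrable_const.add (hYtint r hr')).const_mul _
              · intro x hx'
                have := hB (r, x) ⟨hr', hx'⟩
                rw [← mul_assoc, norm_mul]
                simp only at this
                have h2 : ‖Yt r x‖ ≤ 1 + (Yt r x) ^ 2 := by
                  rw [Real.norm_eq_abs, ← sq_abs]
                  nlinarith [sq_nonneg (|Yt r x| - 1), abs_nonneg (Yt r x)]
                exact mul_le_mul this h2 (norm_nonneg _) hB0
          _ = B * (L + ∫ x in (0:ℝ)..L, (Yt r x) ^ 2) := by
              rw [intervalIntegral.integral_const_mul,
                intervalIntegral.integral_add intervalIntegrable_const (hYtint r hr')]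
              simp
          _ ≤ B * (L + C) := by
              have := hb r hr'
              gcongr
  refine ⟨?_, ?_⟩
  · rw [intervalIntegrable_iff_integrableOn_Ioc_of_le hst]
    have := hprodInt.integral_prod_left
    simp_rw [int_Ioo hL]
    exact this
  · have hsw := integral_integral_swap (f := fun r x => ψ x * (2 * Y r x * Yt r x)) hprodInt
    rw [intervalIntegral.integral_of_le hst]
    simp_rw [int_Ioo hL]
    rw [hsw, ← integral_sub]
    · refine setIntegral_congr_fun measurableSet_Ioo fun x hx' => ?_
      rw [← intervalIntegral.integral_of_le hst,
        intervalIntegral.integral_eq_sub_of_hasDerivAt_of_le hst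
        (f := fun r => ψ x * (Y r x) ^ 2)]
      · have := hYx x
        fun_prop
      · intro r hr
        have := ((hd r ⟨hr.1.le, hr.2.le⟩ x hx').pow 2).const_mul (ψ x)
        refine this.congr_deriv ?_
        push_cast; ring
      · apply ContinuousOn.intervalIntegrable
        rw [uIcc_of_le hst]
        have := hYx x
        have := hc x hx'
        fun_prop
    · have := hYr t
      have h : IntervalIntegrable (fun x => ψ x * (Y t x) ^ 2) volume 0 L :=
        ii_of_cont hL (by fun_prop)
      exact (intervalIntegrable_iff_integrableOn_Ioo_of_le hL).1 h
    · have := hYr s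
      have h : IntervalIntegrable (fun x => ψ x * (Y s x) ^ 2) volume 0 L :=
        ii_of_cont hL (by fun_prop)
      exact (intervalIntegrable_iff_integrableOn_Ioo_of_le hL).1 h

/-- The regularity of a solution used in the proof (`Z` is extended continuously to the plane). -/
structure KdVSys (L T : ℝ) (Z Z1 Z2 Z3 : ℝ → ℝ → ℝ) : Prop where
  cont : Continuous (Function.uncurry Z)
  dom : ∀ t ∈ Ioo 0 T, KdVDom L (Z t) (Z1 t) (Z2 t) (Z3 t)
  dt : ∀ t ∈ Ioo 0 T, ∀ x ∈ Ioo 0 L, HasDerivAt (fun r => Z r x) (-(Z1 t x + Z3 t x)) t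
  ct : ∀ x ∈ Ioo 0 L, ContinuousOn (fun t => Z1 t x + Z3 t x) (Ioo 0 T)

/-- Squared `L²` norm of the time derivative. -/
noncomputable def kdvN (L : ℝ) (Z1 Z3 : ℝ → ℝ → ℝ) (t : ℝ) : ℝ :=
  ∫ x in (0:ℝ)..L, (Z1 t x + Z3 t x) ^ 2

section
variable {L T : ℝ} {Z Z1 Z2 Z3 : ℝ → ℝ → ℝ}

lemma KdVSys.contr (H : KdVSys L T Z Z1 Z2 Z3) (r : ℝ) : Continuous (Z r) :=
  H.cont.comp (by fun_prop : Continuous fun x => (r, x))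

lemma kdvN_nonneg (hL : 0 ≤ L) (t : ℝ) : 0 ≤ kdvN L Z1 Z3 t :=
  intervalIntegral.integral_nonneg hL fun _ _ => sq_nonneg _

lemma KdVSys.growth (hL : 0 ≤ L) (H : KdVSys L T Z Z1 Z2 Z3) {a s t C m δ : ℝ}
    (ha : a ∈ Ioo 0 T) (hs : 0 < s) (hst : s ≤ t) (ht : t < T)
    (hN : ∀ r ∈ Icc s t, kdvN L Z1 Z3 r ≤ C) (hδ : 0 < δ)
    (hm : ∀ r ∈ Icc s t, ∫ x in (0:ℝ)..L, (Z r x - Z a x) ^ 2 ≤ m) :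
    (∫ x in (0:ℝ)..L, (Z t x - Z a x) ^ 2) - ∫ x in (0:ℝ)..L, (Z s x - Z a x) ^ 2
      ≤ (t - s) * (m / (2 * δ) + 2 * δ * kdvN L Z1 Z3 a) := by
  have hI : ∀ r ∈ Icc s t, r ∈ Ioo 0 T := fun r hr => ⟨hs.trans_le hr.1, hr.2.trans_lt ht⟩
  have hc : Continuous (Function.uncurry fun r x => Z r x - Z a x) := by
    have h1 : Continuous fun p : ℝ × ℝ => Z p.1 p.2 := H.cont
    have h2 := H.contr a
    change Continuous fun p : ℝ × ℝ => Z p.1 p.2 - Z a p.2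
    fun_prop
  obtain ⟨hii, heq⟩ := kdv_fub (C := C) hL hst (Y := fun r x => Z r x - Z a x)
    (Yt := fun r x => -(Z1 r x + Z3 r x)) hc
    (fun r hr x hx => (H.dt r (hI r hr) x hx).sub_const _)
    (fun x hx => ((H.ct x hx).mono hI).neg)
    (fun r hr => ((H.dom r (hI r hr)).c1.add (H.dom r (hI r hr)).c3).neg)
    (fun r hr => by simp only [neg_sq]; exact hN r hr)
    (ψ := fun _ => 1) continuous_const
  simp only [one_mul] at heq hii
  rw [← heq]
  calc _ ≤ ∫ r in s..t, (m / (2 * δ) + 2 * δ * kdvN L Z1 Z3 a) := by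
        refine intervalIntegral.integral_mono_on hst hii intervalIntegrable_const fun r hr => ?_
        have hD := (H.dom r (hI r hr)).sub (H.dom a ha)
        have hdiss := hD.diss hL
        obtain ⟨c0, c1, c2, c3, _, _, _, _, _, _⟩ := hD
        have ca1 := (H.dom a ha).c1
        have ca3 := (H.dom a ha).c3
        have cr1 := (H.dom r (hI r hr)).c1
        have cr3 := (H.dom r (hI r hr)).c3
        have i1 : IntervalIntegrable (fun x => -2 * ((Z r x - Z a x) *
            ((Z1 r x - Z1 a x) + (Z3 r x - Z3 a x)))) volume 0 L := ii_of_cont hL (by fun_prop)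
        have i2 : IntervalIntegrable (fun x => (1 / (2 * δ)) * (Z r x - Z a x) ^ 2) volume 0 L :=
          ii_of_cont hL (by fun_prop)
        have i3 : IntervalIntegrable (fun x => (2 * δ) * (Z1 a x + Z3 a x) ^ 2) volume 0 L :=
          ii_of_cont hL (by fun_prop)
        calc ∫ x in (0:ℝ)..L, 2 * (Z r x - Z a x) * -(Z1 r x + Z3 r x)
            ≤ ∫ x in (0:ℝ)..L, (-2 * ((Z r x - Z a x) *
              ((Z1 r x - Z1 a x) + (Z3 r x - Z3 a x))) + (1 / (2 * δ)) * (Z r x - Z a x) ^ 2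
              + (2 * δ) * (Z1 a x + Z3 a x) ^ 2) := by
              refine intervalIntegral.integral_mono_on hL (ii_of_cont hL (by fun_prop))
                ((i1.add i2).add i3) fun x _ => ?_
              have : 0 ≤ (1 / (2 * δ)) * ((Z r x - Z a x) + 2 * δ * (Z1 a x + Z3 a x)) ^ 2 := by
                positivity
              have e : (1 / (2 * δ)) * ((Z r x - Z a x) + 2 * δ * (Z1 a x + Z3 a x)) ^ 2 =
                (1 / (2 * δ)) * (Z r x - Z a x) ^ 2 + 2 * (Z r x - Z a x) * (Z1 a x + Z3 a x)
                  + (2 * δ) * (Z1 a x + Z3 a x) ^ 2 := by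
                field_simp
                ring
              nlinarith
          _ = -2 * ((Z1 r 0 - Z1 a 0) ^ 2 / 2) + (1 / (2 * δ)) *
                (∫ x in (0:ℝ)..L, (Z r x - Z a x) ^ 2) + 2 * δ * kdvN L Z1 Z3 a := by
              rw [intervalIntegral.integral_add (i1.add i2) i3, intervalIntegral.integral_add i1 i2,
                intervalIntegral.integral_const_mul, intervalIntegral.integral_const_mul,
                intervalIntegral.integral_const_mul, hdiss]
              rfl
          _ ≤ _ := by
              have h1 := hm r hr
              have h2 : (1 / (2 * δ)) * (∫ x in (0:ℝ)..L, (Z r x - Z a x) ^ 2) ≤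
                (1 / (2 * δ)) * m := by gcongr
              have h3 : (1 / (2 * δ)) * m = m / (2 * δ) := by ring
              nlinarith [sq_nonneg (Z1 r 0 - Z1 a 0)]
    _ = _ := by rw [intervalIntegral.integral_const, smul_eq_mul]

lemma KdVSys.cont_diff (H : KdVSys L T Z Z1 Z2 Z3) (f g : ℝ → ℝ) (hf : Continuous f)
    (hg : Continuous g) :
    Continuous fun r => ∫ x in (0:ℝ)..L, (Z (f r) x - Z (g r) x) ^ 2 := by
  apply intervalIntegral.continuous_parametric_intervalIntegral_of_continuous'
  change Continuous fun p : ℝ × ℝ => (Z (f p.1) p.2 - Z (g p.1) p.2) ^ 2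
  have h1 : Continuous fun p : ℝ × ℝ => Z (f p.1) p.2 :=
    H.cont.comp (by fun_prop : Continuous fun p : ℝ × ℝ => (f p.1, p.2))
  have h2 : Continuous fun p : ℝ × ℝ => Z (g p.1) p.2 :=
    H.cont.comp (by fun_prop : Continuous fun p : ℝ × ℝ => (g p.1, p.2))
  exact (h1.sub h2).pow 2

lemma KdVSys.growth' (hL : 0 ≤ L) (H : KdVSys L T Z Z1 Z2 Z3) {a t : ℝ}
    (ha : 0 < a) (hat : a < t) (ht : t < T)
    (hN : ∀ s, a < s → ∃ C, ∀ r ∈ Icc s t, kdvN L Z1 Z3 r ≤ C) :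
    ∫ x in (0:ℝ)..L, (Z t x - Z a x) ^ 2 ≤ 4 * (t - a) ^ 2 * kdvN L Z1 Z3 a := by
  have hec := H.cont_diff (fun r => r) (fun _ => a) continuous_id continuous_const
  set e : ℝ → ℝ := fun r => ∫ x in (0:ℝ)..L, (Z r x - Z a x) ^ 2 with he
  obtain ⟨q, hq, hmax⟩ := isCompact_Icc.exists_isMaxOn (nonempty_Icc.2 hat.le) hec.continuousOn
  have hmax' : ∀ r ∈ Icc a t, e r ≤ e q := fun r hr => hmax hr
  have hK := kdvN_nonneg (Z1 := Z1) (Z3 := Z3) hL a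
  have hea : e a = 0 := by simp [he]
  have he0 : ∀ r, 0 ≤ e r := fun r => intervalIntegral.integral_nonneg hL fun _ _ => sq_nonneg _
  have hδ : 0 < t - a := by linarith
  have key : e q ≤ (t - a) * (e q / (2 * (t - a)) + 2 * (t - a) * kdvN L Z1 Z3 a) := by
    have hpos : 0 ≤ e q / (2 * (t - a)) + 2 * (t - a) * kdvN L Z1 Z3 a := by
      have := he0 q
      positivity
    rcases eq_or_lt_of_le hq.1 with h | h
    · rw [← h, hea] at hpos ⊢
      positivity
    · have hlim : Filter.Tendsto e (nhdsWithin a (Ioi a)) (nhds 0) := by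
        rw [← hea]; exact hec.continuousAt.tendsto.mono_left nhdsWithin_le_nhds
      have hlim2 : Filter.Tendsto (fun s => e q - e s) (nhdsWithin a (Ioi a)) (nhds (e q - 0)) :=
        tendsto_const_nhds.sub hlim
      rw [sub_zero] at hlim2
      refine le_of_tendsto hlim2 ?_
      filter_upwards [Ioo_mem_nhdsGT h] with s hs
      obtain ⟨C, hC⟩ := hN s hs.1
      have := H.growth hL (a := a) (s := s) (t := q) (C := C) (m := e q) (δ := t - a)
        ⟨ha, hat.trans ht⟩ (ha.trans hs.1) hs.2.le (hq.2.trans_lt ht)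
        (fun r hr => hC r ⟨hr.1, hr.2.trans hq.2⟩) hδ
        (fun r hr => hmax' r ⟨hs.1.le.trans hr.1, hr.2.trans hq.2⟩)
      refine this.trans ?_
      apply mul_le_mul_of_nonneg_right _ hpos
      linarith [hs.1, hq.2]
  have hk2 : (t - a) * (e q / (2 * (t - a)) + 2 * (t - a) * kdvN L Z1 Z3 a) =
      e q / 2 + 2 * (t - a) ^ 2 * kdvN L Z1 Z3 a := by
    field_simp
  have := hmax' t ⟨hat.le, le_rfl⟩
  change e t ≤ _
  rw [hk2] at key
  linarith

lemma KdVSys.mono (hL : 0 ≤ L) (H : KdVSys L T Z Z1 Z2 Z3) {s t h C : ℝ}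
    (hs : 0 < s) (hst : s ≤ t) (hh : 0 < h) (ht : t + h < T)
    (hN : ∀ r ∈ Icc s (t + h), kdvN L Z1 Z3 r ≤ C) :
    ∫ x in (0:ℝ)..L, (Z (t + h) x - Z t x) ^ 2 ≤ ∫ x in (0:ℝ)..L, (Z (s + h) x - Z s x) ^ 2 := by
  have hI : ∀ r ∈ Icc s t, r ∈ Ioo 0 T :=
    fun r hr => ⟨hs.trans_le hr.1, by linarith [hr.2]⟩
  have hIh : ∀ r ∈ Icc s t, r + h ∈ Ioo 0 T :=
    fun r hr => ⟨by linarith [hr.1], by linarith [hr.2]⟩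
  have hc : Continuous (Function.uncurry fun r x => Z (r + h) x - Z r x) := by
    have h1 : Continuous fun p : ℝ × ℝ => Z p.1 p.2 := H.cont
    have h2 : Continuous fun p : ℝ × ℝ => Z (p.1 + h) p.2 :=
      H.cont.comp (by fun_prop : Continuous fun p : ℝ × ℝ => (p.1 + h, p.2))
    change Continuous fun p : ℝ × ℝ => Z (p.1 + h) p.2 - Z p.1 p.2
    fun_prop
  obtain ⟨hii, heq⟩ := kdv_fub (C := 4 * C) hL hst (Y := fun r x => Z (r + h) x - Z r x)
    (Yt := fun r x => -(Z1 (r + h) x + Z3 (r + h) x) - -(Z1 r x + Z3 r x)) hc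
    (fun r hr x hx => ((H.dt _ (hIh r hr) x hx).comp_add_const r h).sub (H.dt r (hI r hr) x hx))
    (fun x hx => (((H.ct x hx).comp (by fun_prop) hIh).neg).sub ((H.ct x hx).mono hI).neg)
    (fun r hr => ((H.dom _ (hIh r hr)).c1.add (H.dom _ (hIh r hr)).c3).neg.sub
      ((H.dom r (hI r hr)).c1.add (H.dom r (hI r hr)).c3).neg)
    (fun r hr => by
      have c1 := (H.dom r (hI r hr)).c1
      have c3 := (H.dom r (hI r hr)).c3
      have c1' := (H.dom _ (hIh r hr)).c1
      have c3' := (H.dom _ (hIh r hr)).c3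
      have i1 : IntervalIntegrable (fun x => 2 * (Z1 (r + h) x + Z3 (r + h) x) ^ 2) volume 0 L :=
        ii_of_cont hL (by fun_prop)
      have i2 : IntervalIntegrable (fun x => 2 * (Z1 r x + Z3 r x) ^ 2) volume 0 L :=
        ii_of_cont hL (by fun_prop)
      calc _ ≤ ∫ x in (0:ℝ)..L, (2 * (Z1 (r + h) x + Z3 (r + h) x) ^ 2
            + 2 * (Z1 r x + Z3 r x) ^ 2) := by
            refine intervalIntegral.integral_mono_on hL (ii_of_cont hL (by fun_prop))
              (i1.add i2) fun x _ => ?_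
            nlinarith [sq_nonneg ((Z1 (r + h) x + Z3 (r + h) x) + (Z1 r x + Z3 r x))]
        _ = 2 * kdvN L Z1 Z3 (r + h) + 2 * kdvN L Z1 Z3 r := by
            rw [intervalIntegral.integral_add i1 i2, intervalIntegral.integral_const_mul,
              intervalIntegral.integral_const_mul]
            rfl
        _ ≤ 4 * C := by
            have h1 := hN r ⟨hr.1, by linarith [hr.2]⟩
            have h2 := hN (r + h) ⟨by linarith [hr.1], by linarith [hr.2]⟩
            linarith)
    (ψ := fun _ => 1) continuous_const
  simp only [one_mul] at heq hii
  rw [← sub_nonpos, ← heq]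
  have : ∫ r in s..t, (∫ x in (0:ℝ)..L, 2 * (Z (r + h) x - Z r x) *
      (-(Z1 (r + h) x + Z3 (r + h) x) - -(Z1 r x + Z3 r x))) ≤ ∫ r in s..t, (0:ℝ) := by
    refine intervalIntegral.integral_mono_on hst hii intervalIntegrable_const fun r hr => ?_
    have hdiss := ((H.dom _ (hIh r hr)).sub (H.dom r (hI r hr))).diss hL
    have : ∫ x in (0:ℝ)..L, 2 * (Z (r + h) x - Z r x) *
      (-(Z1 (r + h) x + Z3 (r + h) x) - -(Z1 r x + Z3 r x)) =
      -2 * ∫ x in (0:ℝ)..L, (Z (r + h) x - Z r x) *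
            ((Z1 (r + h) x - Z1 r x) + (Z3 (r + h) x - Z3 r x)) := by
      rw [← intervalIntegral.integral_const_mul]
      congr 1
      ext x
      ring
    rw [this, hdiss]
    nlinarith [sq_nonneg (Z1 (r + h) 0 - Z1 r 0)]
  simpa using this

lemma KdVSys.gap (hL : 0 ≤ L) (H : KdVSys L T Z Z1 Z2 Z3) {a b t : ℝ}
    (ha : 0 < a) (hat : a < t) (htb : t < b) (hb : b ≤ T)
    (hN : ∀ s t, a < s → t < b → ∃ C, ∀ r ∈ Icc s t, kdvN L Z1 Z3 r ≤ C) :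
    kdvN L Z1 Z3 t ≤ 4 * kdvN L Z1 Z3 a := by
  have htI : t ∈ Ioo 0 T := ⟨ha.trans hat, htb.trans_le hb⟩
  have hK := kdvN_nonneg (Z1 := Z1) (Z3 := Z3) hL a
  have key : ∀ h, 0 < h → t + h < b →
      ∫ x in (0:ℝ)..L, ((Z (t + h) x - Z t x) / h) ^ 2 ≤ 4 * kdvN L Z1 Z3 a := by
    intro h hh hthb
    have h1 : ∫ x in (0:ℝ)..L, (Z (t + h) x - Z t x) ^ 2 ≤
        ∫ x in (0:ℝ)..L, (Z (a + h) x - Z a x) ^ 2 := by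
      have hc := H.cont_diff (L := L) (fun r => r + h) (fun r => r) (by fun_prop) continuous_id
      refine ge_of_tendsto (hc.continuousAt.tendsto.mono_left
        (nhdsWithin_le_nhds (s := Ioi a))) ?_
      filter_upwards [Ioo_mem_nhdsGT hat] with s hs
      obtain ⟨C, hC⟩ := hN s (t + h) hs.1 hthb
      exact H.mono hL (ha.trans hs.1) hs.2.le hh (hthb.trans_le hb) hC
    have h2 := H.growth' hL ha (by linarith : a < a + h) (by linarith)
      (fun s hs => hN s (a + h) hs (by linarith))
    have h3 : ∫ x in (0:ℝ)..L, ((Z (t + h) x - Z t x) / h) ^ 2 =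
        (1 / h ^ 2) * ∫ x in (0:ℝ)..L, (Z (t + h) x - Z t x) ^ 2 := by
      rw [← intervalIntegral.integral_const_mul]
      congr 1; ext x; field_simp
    rw [h3, div_mul_eq_mul_div, one_mul, div_le_iff₀ (by positivity)]
    have e : a + h - a = h := by ring
    rw [e] at h2
    linarith
  -- Fatou
  have hD := H.dom t htI
  have c1 := hD.c1
  have c3 := hD.c3
  have hfat := lintegral_liminf_le (μ := volume.restrict (Ioo 0 L)) (u := nhdsWithin (0:ℝ) (Ioi 0))
    (f := fun h x => ENNReal.ofReal (((Z (t + h) x - Z t x) / h) ^ 2)) (by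
      intro h
      have := H.contr t
      have := H.contr (t + h)
      have : Continuous fun x => ((Z (t + h) x - Z t x) / h) ^ 2 := by fun_prop
      exact this.measurable.ennreal_ofReal)
  have hl : ∫⁻ x in Ioo 0 L, Filter.liminf (fun h => ENNReal.ofReal (((Z (t + h) x - Z t x) / h) ^ 2))
      (nhdsWithin (0:ℝ) (Ioi 0)) = ENNReal.ofReal (kdvN L Z1 Z3 t) := by
    have hi : IntervalIntegrable (fun x => (Z1 t x + Z3 t x) ^ 2) volume 0 L :=
      ii_of_cont hL (by fun_prop)
    rw [kdvN, int_Ioo hL, ofReal_integral_eq_lintegral_ofReal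
      ((intervalIntegrable_iff_integrableOn_Ioo_of_le hL).1 hi) (.of_forall fun _ => sq_nonneg _)]
    refine setLIntegral_congr_fun measurableSet_Ioo fun x hx => ?_
    refine Filter.Tendsto.liminf_eq ?_
    refine (ENNReal.continuous_ofReal.tendsto _).comp ?_
    have h1 := (H.dt t htI x hx).tendsto_slope_zero_right
    have h2 := h1.pow 2
    rw [neg_sq] at h2
    refine h2.congr fun h => ?_
    simp only [smul_eq_mul]
    congr 1
    ring
  rw [hl] at hfat
  have hr : Filter.liminf (fun h => ∫⁻ x in Ioo 0 L,
      ENNReal.ofReal (((Z (t + h) x - Z t x) / h) ^ 2)) (nhdsWithin (0:ℝ) (Ioi 0))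
      ≤ ENNReal.ofReal (4 * kdvN L Z1 Z3 a) := by
    refine Filter.liminf_le_of_frequently_le' (Filter.Eventually.frequently ?_)
    filter_upwards [Ioo_mem_nhdsGT (by linarith : (0:ℝ) < b - t)] with h hh
    have := H.contr t
    have := H.contr (t + h)
    have hi : IntervalIntegrable (fun x => ((Z (t + h) x - Z t x) / h) ^ 2) volume 0 L :=
      ii_of_cont hL (by fun_prop)
    rw [← ofReal_integral_eq_lintegral_ofReal
      ((intervalIntegrable_iff_integrableOn_Ioo_of_le hL).1 hi) (.of_forall fun _ => sq_nonneg _),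
      ← int_Ioo hL]
    exact ENNReal.ofReal_le_ofReal (key h hh.1 (by linarith [hh.2]))
  exact (ENNReal.ofReal_le_ofReal_iff (by positivity)).1 (hfat.trans hr)

end

/-- Test functions for the lower semicontinuity argument. -/
def KdVTest (L : ℝ) (p p1 p2 p3 : ℝ → ℝ) : Prop :=
  (∀ x, HasDerivAt p (p1 x) x) ∧ (∀ x, HasDerivAt p1 (p2 x) x) ∧ (∀ x, HasDerivAt p2 (p3 x) x) ∧
    Continuous p3 ∧ p 0 = 0 ∧ p L = 0 ∧ p1 0 = 0

lemma KdVTest.exists_bump {L x e : ℝ} (he : 0 < e) (h0 : 0 ≤ x - e) (hL : x + e ≤ L) :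
    ∃ p p1 p2 p3, KdVTest L p p1 p2 p3 ∧ (∀ y, 0 ≤ p y) ∧ 0 < p x ∧
      ∀ y, e ≤ |y - x| → p y = 0 := by
  let b : ContDiffBump x := ⟨e / 2, e, by linarith, by linarith⟩
  have hb : ContDiff ℝ 3 b := b.contDiff
  have hz : ∀ y, e ≤ |y - x| → b y = 0 := fun y hy =>
    b.zero_of_le_dist (by rw [Real.dist_eq]; exact hy)
  have hb1 : ContDiff ℝ 2 (deriv b) := by
    apply ContDiff.deriv' (n := 2)
    norm_num
    exact hb
  have hb2 : ContDiff ℝ 1 (deriv (deriv b)) := by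
    apply ContDiff.deriv' (n := 1)
    norm_num
    exact hb1
  have hb3 : ContDiff ℝ 0 (deriv (deriv (deriv b))) := by
    apply ContDiff.deriv' (n := 0)
    norm_num
    exact hb2
  have z0 : b 0 = 0 := hz 0 (by rw [le_abs]; right; linarith)
  refine ⟨b, deriv b, deriv (deriv b), deriv (deriv (deriv b)), ⟨?_, ?_, ?_, hb3.continuous, z0,
    hz L (by rw [le_abs]; left; linarith), ?_⟩, fun y => b.nonneg, ?_, hz⟩
  · exact fun y => (hb.differentiable (by norm_num) y).hasDerivAt
  · exact fun y => (hb1.differentiable (by norm_num) y).hasDerivAt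
  · exact fun y => (hb2.differentiable (by norm_num) y).hasDerivAt
  · apply IsLocalMin.deriv_eq_zero
    exact Filter.Eventually.of_forall fun y => by rw [z0]; exact b.nonneg
  · exact b.pos_of_mem_ball (Metric.mem_ball_self he)

lemma bound_of_test {L n : ℝ} (hL : 0 < L) {f : ℝ → ℝ} (hf : ContinuousOn f (Icc 0 L))
    (h : ∀ p p1 p2 p3, KdVTest L p p1 p2 p3 →
      |∫ x in (0:ℝ)..L, f x * p x| ≤ n * ∫ x in (0:ℝ)..L, |p x|) :
    ∀ x ∈ Ioo 0 L, |f x| ≤ n := by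
  -- one-sided version
  have one : ∀ g : ℝ → ℝ, ContinuousOn g (Icc 0 L) → (∀ p p1 p2 p3, KdVTest L p p1 p2 p3 →
      ∫ x in (0:ℝ)..L, g x * p x ≤ n * ∫ x in (0:ℝ)..L, |p x|) → ∀ x ∈ Ioo 0 L, g x ≤ n := by
    intro g hg hgt x hx
    by_contra hlt
    push Not at hlt
    have hxc : ContinuousAt g x := hg.continuousAt (Icc_mem_nhds hx.1 hx.2)
    have hev := (hxc.eventually (lt_mem_nhds hlt)).and (Ioo_mem_nhds hx.1 hx.2)
    obtain ⟨e, he, hball⟩ := Metric.eventually_nhds_iff.1 hev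
    have hm1 := (hball (y := x - e / 2) (by rw [Real.dist_eq, abs_lt]; constructor <;> linarith)).2
    have hm2 := (hball (y := x + e / 2) (by rw [Real.dist_eq, abs_lt]; constructor <;> linarith)).2
    obtain ⟨p, p1, p2, p3, hp, hp0, hpx, hpz⟩ := KdVTest.exists_bump (L := L) (x := x) (e := e / 2)
      (by linarith) hm1.1.le hm2.2.le
    have hpc : Continuous p := continuous_iff_continuousAt.2 fun y => (hp.1 y).continuousAt
    have h1 := hgt p p1 p2 p3 hp
    have h2 : 0 < ∫ y in (0:ℝ)..L, (g y - n) * p y := by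
      refine intervalIntegral.integral_pos hL (by fun_prop) ?_ ⟨x, ⟨hx.1.le, hx.2.le⟩, ?_⟩
      · intro y hy
        by_cases hye : e / 2 ≤ |y - x|
        · rw [hpz y hye, mul_zero]
        · push Not at hye
          have := (hball (y := y) (by rw [Real.dist_eq]; linarith)).1
          exact mul_nonneg (by linarith) (hp0 y)
      · exact mul_pos (by linarith) hpx
    have h3 : ∫ y in (0:ℝ)..L, (g y - n) * p y =
        (∫ y in (0:ℝ)..L, g y * p y) - n * ∫ y in (0:ℝ)..L, |p y| := by
      rw [← intervalIntegral.integral_const_mul, ← intervalIntegral.integral_sub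
        (ii_of_cont hL.le (by fun_prop)) (ii_of_cont hL.le (by fun_prop))]
      congr 1; ext y
      rw [abs_of_nonneg (hp0 y)]; ring
    linarith
  intro x hx
  rw [abs_le]
  constructor
  · have := one (fun x => - f x) hf.neg (fun p p1 p2 p3 hp => by
      refine le_trans ?_ (h p p1 p2 p3 hp)
      simp only [neg_mul, intervalIntegral.integral_neg]
      exact neg_le_abs _) x hx
    linarith
  · exact one f hf (fun p p1 p2 p3 hp => (le_abs_self _).trans (h p p1 p2 p3 hp)) x hx

section
variable {L T : ℝ} {Z Z1 Z2 Z3 : ℝ → ℝ → ℝ}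

/-- Closed sets exhausting the time interval. -/
def kdvF (L : ℝ) (Z : ℝ → ℝ → ℝ) (n : ℕ) : Set ℝ :=
  {t | ∀ p p1 p2 p3, KdVTest L p p1 p2 p3 →
    |∫ x in (0:ℝ)..L, Z t x * (p1 x + p3 x)| ≤ n * ∫ x in (0:ℝ)..L, |p x|}

lemma kdvF_closed (H : KdVSys L T Z Z1 Z2 Z3) (n : ℕ) : IsClosed (kdvF L Z n) := by
  have : kdvF L Z n = ⋂ (p) (p1) (p2) (p3) (_ : KdVTest L p p1 p2 p3),
      {t | |∫ x in (0:ℝ)..L, Z t x * (p1 x + p3 x)| ≤ n * ∫ x in (0:ℝ)..L, |p x|} := by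
    ext t; simp [kdvF]
  rw [this]
  refine isClosed_iInter fun p => isClosed_iInter fun p1 => isClosed_iInter fun p2 =>
    isClosed_iInter fun p3 => isClosed_iInter fun hp => ?_
  refine isClosed_le ?_ continuous_const
  apply Continuous.abs
  apply intervalIntegral.continuous_parametric_intervalIntegral_of_continuous'
  have k1 : Continuous p1 := continuous_iff_continuousAt.2 fun x => (hp.2.1 x).continuousAt
  have k3 : Continuous p3 := hp.2.2.2.1
  have h1 : Continuous fun p : ℝ × ℝ => Z p.1 p.2 := H.cont
  change Continuous fun q : ℝ × ℝ => Z q.1 q.2 * (p1 q.2 + p3 q.2)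
  fun_prop

lemma kdvF_bound (hL : 0 < L) (H : KdVSys L T Z Z1 Z2 Z3) (n : ℕ) {t : ℝ} (ht : t ∈ Ioo 0 T)
    (hn : t ∈ kdvF L Z n) : kdvN L Z1 Z3 t ≤ n ^ 2 * L := by
  have hD := H.dom t ht
  have c1 := hD.c1
  have c3 := hD.c3
  have hb := bound_of_test (n := n) hL (f := fun x => Z1 t x + Z3 t x) (by fun_prop)
    (fun p p1 p2 p3 hp => by
      have := hn p p1 p2 p3 hp
      obtain ⟨e0, e1, e2, e3, z0, zL, z01⟩ := hp
      rwa [hD.test hL.le e0 e1 e2 e3 z0 zL z01, abs_neg] at this)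
  rw [kdvN, int_Ioo hL.le]
  have hi : IntervalIntegrable (fun x => (Z1 t x + Z3 t x) ^ 2) volume 0 L :=
      ii_of_cont hL.le (by fun_prop)
  calc ∫ x in Ioo 0 L, (Z1 t x + Z3 t x) ^ 2 ≤ ∫ x in Ioo 0 L, (n:ℝ) ^ 2 := by
        refine setIntegral_mono_on
          ((intervalIntegrable_iff_integrableOn_Ioo_of_le hL.le).1 hi) (by simp)
          measurableSet_Ioo fun x hx => ?_
        rw [← sq_abs]
        have := hb x hx
        gcongr
    _ = _ := by simp [hL.le, mul_comm]

lemma kdvF_cover (hL : 0 < L) (H : KdVSys L T Z Z1 Z2 Z3) {t : ℝ} (ht : t ∈ Ioo 0 T) :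
    ∃ n, t ∈ kdvF L Z n := by
  have hD := H.dom t ht
  have c1 := hD.c1
  have c3 := hD.c3
  obtain ⟨B, hB⟩ := isCompact_Icc.exists_bound_of_continuousOn
    (f := fun x => Z1 t x + Z3 t x) (s := Icc 0 L) (by fun_prop)
  obtain ⟨n, hn⟩ := exists_nat_ge B
  refine ⟨n, fun p p1 p2 p3 hp => ?_⟩
  obtain ⟨e0, e1, e2, e3, z0, zL, z01⟩ := hp
  have k0 : Continuous p := continuous_iff_continuousAt.2 fun x => (e0 x).continuousAt
  rw [hD.test hL.le e0 e1 e2 e3 z0 zL z01, abs_neg, ← intervalIntegral.integral_const_mul]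
  refine (intervalIntegral.abs_integral_le_integral_abs hL.le).trans ?_
  refine intervalIntegral.integral_mono_on hL.le (ii_of_cont hL.le (by fun_prop))
    (ii_of_cont hL.le (by fun_prop)) fun x hx => ?_
  rw [abs_mul]
  have := hB x hx
  rw [Real.norm_eq_abs] at this
  gcongr
  linarith

/-- Times around which the time derivative is bounded in `L²`. -/
def kdvGood (L T : ℝ) (Z1 Z3 : ℝ → ℝ → ℝ) : Set ℝ :=
  {t | ∃ C, ∀ᶠ r in nhds t, kdvN L Z1 Z3 r ≤ C}

lemma kdvGood_open : IsOpen (kdvGood L T Z1 Z3) := by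
  rw [isOpen_iff_mem_nhds]
  rintro t ⟨C, hC⟩
  filter_upwards [eventually_eventually_nhds.2 hC] with r hr
  exact ⟨C, hr⟩

lemma kdvGood_bdd {s t : ℝ} (h : Icc s t ⊆ kdvGood L T Z1 Z3) :
    ∃ C, ∀ r ∈ Icc s t, kdvN L Z1 Z3 r ≤ C := by
  refine isCompact_Icc.induction_on (p := fun S => ∃ C, ∀ r ∈ S, kdvN L Z1 Z3 r ≤ C)
    ⟨0, by simp⟩ ?_ ?_ ?_
  · rintro S S' hS ⟨C, hC⟩
    exact ⟨C, fun r hr => hC r (hS hr)⟩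
  · rintro S S' ⟨C, hC⟩ ⟨C', hC'⟩
    refine ⟨max C C', ?_⟩
    rintro r (hr | hr)
    · exact (hC r hr).trans (le_max_left _ _)
    · exact (hC' r hr).trans (le_max_right _ _)
  · intro x hx
    obtain ⟨C, hC⟩ := h hx
    exact ⟨_, mem_nhdsWithin_of_mem_nhds hC, C, fun r hr => hr⟩

lemma KdVSys.good (hL : 0 < L) (H : KdVSys L T Z Z1 Z2 Z3) :
    Ioo 0 T ⊆ kdvGood L T Z1 Z3 := by
  by_contra hne
  obtain ⟨t1, ht1, ht1G⟩ := not_subset.1 hne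
  set G := kdvGood L T Z1 Z3 with hG
  have hGo : IsOpen G := kdvGood_open
  let D : Set ℝ := Ioo 0 T ∩ Gᶜ
  have hDl : IsLocallyClosed D := isOpen_Ioo.isLocallyClosed.inter hGo.isClosed_compl.isLocallyClosed
  have : LocallyCompactSpace D := hDl.locallyCompactSpace
  have : Nonempty D := ⟨⟨t1, ht1, ht1G⟩⟩
  obtain ⟨n, ⟨d, hd⟩⟩ := nonempty_interior_of_iUnion_of_closed (X := D)
    (f := fun n : ℕ => (Subtype.val : D → ℝ) ⁻¹' (kdvF L Z n))
    (fun n => (kdvF_closed H n).preimage continuous_subtype_val) (by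
      ext t
      simp only [mem_iUnion, mem_preimage, mem_univ, iff_true]
      exact kdvF_cover hL H t.2.1)
  rw [mem_interior_iff_mem_nhds, mem_nhds_subtype] at hd
  obtain ⟨u, hu, hsub⟩ := hd
  obtain ⟨d, hdI, hdG⟩ := d
  simp only at hu
  obtain ⟨e, he, hball⟩ := Metric.mem_nhds_iff.1
    (Filter.inter_mem hu (Ioo_mem_nhds hdI.1 hdI.2))
  have hin : ∀ r, d - e < r → r < d + e → r ∈ u ∧ r ∈ Ioo 0 T := fun r h1 h2 =>
    hball (by rw [Metric.mem_ball, Real.dist_eq, abs_lt]; constructor <;> linarith)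
  have hDb : ∀ r, d - e < r → r < d + e → r ∉ G → kdvN L Z1 Z3 r ≤ n ^ 2 * L := by
    intro r h1 h2 hr
    have hh := hin r h1 h2
    exact kdvF_bound hL H n hh.2 (hsub (a := ⟨r, hh.2, hr⟩) hh.1)
  apply hdG
  set t0 := d - e / 2 with ht0
  have N0 := fun t => kdvN_nonneg (Z1 := Z1) (Z3 := Z3) hL.le t
  set M := n ^ 2 * L + kdvN L Z1 Z3 t0 with hM
  have hM1 : n ^ 2 * L ≤ M := by have := N0 t0; linarith
  have hM2 : kdvN L Z1 Z3 t0 ≤ M := by have : 0 ≤ (n:ℝ) ^ 2 * L := by positivity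
                                       linarith
  refine ⟨4 * M, ?_⟩
  filter_upwards [Ioo_mem_nhds (by linarith : d - e / 2 < d) (by linarith : d < d + e)] with t ht
  have hM0 : 0 ≤ M := (N0 t0).trans hM2
  by_cases htG : t ∈ G
  swap
  · have := hDb t (by linarith [ht.1]) ht.2 htG
    linarith
  -- the last bad time (or `t0`) before `t`
  have hcomp : IsCompact (Icc t0 t ∩ (Gᶜ ∪ {t0})) :=
    isCompact_Icc.inter_right (hGo.isClosed_compl.union isClosed_singleton)
  obtain ⟨a, ⟨haI, haG⟩, hmax⟩ := hcomp.exists_isGreatest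
    ⟨t0, ⟨le_rfl, ht.1.le⟩, Or.inr rfl⟩
  have haM : kdvN L Z1 Z3 a ≤ M := by
    rcases haG with h | h
    · exact (hDb a (by linarith [haI.1]) (by linarith [haI.2, ht.2]) h).trans hM1
    · rw [mem_singleton_iff.1 h]; exact hM2
  have hat : a < t := by
    rcases haG with h | h
    · refine lt_of_le_of_ne haI.2 ?_
      rintro rfl
      exact h htG
    · rw [mem_singleton_iff.1 h]; exact ht.1
  obtain ⟨ε, hε, hεG⟩ := Metric.isOpen_iff.1 hGo t htG
  have hGab : ∀ r, a < r → r < t + ε → r ∈ G := by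
    intro r h1 h2
    rcases le_or_gt r t with h | h
    · by_contra hrG
      have := hmax ⟨⟨haI.1.trans h1.le, h⟩, Or.inl hrG⟩
      linarith
    · exact hεG (by rw [Metric.mem_ball, Real.dist_eq, abs_lt]; constructor <;> linarith)
  have htT := (hin t (by linarith [ht.1]) ht.2).2
  have ha0 := (hin a (by linarith [haI.1]) (by linarith [haI.2, ht.2])).2
  have := H.gap hL.le (a := a) (b := min (t + ε) T) ha0.1 hat (lt_min (by linarith) htT.2)
    (min_le_right _ _) (fun s t' hs ht' => kdvGood_bdd (T := T) fun r hr =>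
      hGab r (hs.trans_le hr.1) (hr.2.trans_lt (ht'.trans_le (min_le_left _ _))))
  linarith

end

section
variable {L T : ℝ} {Z Z1 Z2 Z3 : ℝ → ℝ → ℝ}

lemma KdVSys.fub (hL : 0 < L) (H : KdVSys L T Z Z1 Z2 Z3) {s t : ℝ}
    (hs : 0 < s) (hst : s ≤ t) (ht : t < T) {ψ : ℝ → ℝ} (hψ : Continuous ψ) :
    IntervalIntegrable (fun r => ∫ x in (0:ℝ)..L, ψ x * (2 * Z r x * -(Z1 r x + Z3 r x)))
      volume s t ∧
    ∫ r in s..t, ∫ x in (0:ℝ)..L, ψ x * (2 * Z r x * -(Z1 r x + Z3 r x)) =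
      (∫ x in (0:ℝ)..L, ψ x * (Z t x) ^ 2) - ∫ x in (0:ℝ)..L, ψ x * (Z s x) ^ 2 := by
  have hI : ∀ r ∈ Icc s t, r ∈ Ioo 0 T := fun r hr => ⟨hs.trans_le hr.1, hr.2.trans_lt ht⟩
  obtain ⟨C, hC⟩ := kdvGood_bdd (T := T) (Z1 := Z1) (Z3 := Z3)
    (fun r hr => H.good hL (hI r hr) : Icc s t ⊆ _)
  exact kdv_fub (C := C) hL.le hst (Y := Z)
    (Yt := fun r x => -(Z1 r x + Z3 r x)) H.cont
    (fun r hr x hx => H.dt r (hI r hr) x hx)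
    (fun x hx => ((H.ct x hx).mono hI).neg)
    (fun r hr => ((H.dom r (hI r hr)).c1.add (H.dom r (hI r hr)).c3).neg)
    (fun r hr => by simp only [neg_sq]; exact hC r hr) hψ

lemma KdVSys.cont_E (H : KdVSys L T Z Z1 Z2 Z3) :
    Continuous fun r => ∫ x in (0:ℝ)..L, (Z r x) ^ 2 := by
  apply intervalIntegral.continuous_parametric_intervalIntegral_of_continuous'
  exact H.cont.pow 2

lemma KdVSys.energy (hL : 0 < L) (H : KdVSys L T Z Z1 Z2 Z3) {t : ℝ} (ht : t ∈ Ioo 0 T) :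
    ∫ x in (0:ℝ)..L, (Z t x) ^ 2 ≤ ∫ x in (0:ℝ)..L, (Z 0 x) ^ 2 := by
  refine ge_of_tendsto (H.cont_E.continuousAt.tendsto.mono_left
        (nhdsWithin_le_nhds (a := (0:ℝ)) (s := Ioi 0))) ?_
  filter_upwards [Ioo_mem_nhdsGT ht.1] with s hs
  obtain ⟨hii, heq⟩ := H.fub hL hs.1 hs.2.le ht.2 (ψ := fun _ => 1) continuous_const
  simp only [one_mul] at heq hii
  rw [← sub_nonpos, ← heq]
  have : ∫ r in s..t, (∫ x in (0:ℝ)..L, 2 * Z r x * -(Z1 r x + Z3 r x)) ≤ ∫ r in s..t, (0:ℝ) := by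
    refine intervalIntegral.integral_mono_on hs.2.le hii intervalIntegrable_const fun r hr => ?_
    have hdiss := (H.dom r ⟨hs.1.trans_le hr.1, hr.2.trans_lt ht.2⟩).diss hL.le
    have : ∫ x in (0:ℝ)..L, 2 * Z r x * -(Z1 r x + Z3 r x) =
      -2 * ∫ x in (0:ℝ)..L, Z r x * (Z1 r x + Z3 r x) := by
      rw [← intervalIntegral.integral_const_mul]
      congr 1
      ext x
      ring
    rw [this, hdiss]
    nlinarith [sq_nonneg (Z1 r 0)]
  simpa using this

lemma KdVSys.inner (hL : 0 < L) (H : KdVSys L T Z Z1 Z2 Z3) {s t : ℝ}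
    (hs : 0 < s) (hst : s ≤ t) (ht : t < T) :
    ∫ r in s..t, ∫ x in (0:ℝ)..L, ((Z r x) ^ 2 + (Z1 r x) ^ 2) ≤
      (4 * T + L) / 3 * ∫ x in (0:ℝ)..L, (Z 0 x) ^ 2 := by
  obtain ⟨hii, heq⟩ := H.fub hL hs hst ht (ψ := fun x => x) continuous_id
  set E0 := ∫ x in (0:ℝ)..L, (Z 0 x) ^ 2 with hE0
  have hE0n : 0 ≤ E0 := intervalIntegral.integral_nonneg hL.le fun _ _ => sq_nonneg _
  have hI : ∀ r ∈ Icc s t, r ∈ Ioo 0 T := fun r hr => ⟨hs.trans_le hr.1, hr.2.trans_lt ht⟩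
  have hpt : ∀ r ∈ Icc s t, ∫ x in (0:ℝ)..L, ((Z r x) ^ 2 + (Z1 r x) ^ 2) =
      4 / 3 * (∫ x in (0:ℝ)..L, (Z r x) ^ 2) -
        1 / 3 * ∫ x in (0:ℝ)..L, x * (2 * Z r x * -(Z1 r x + Z3 r x)) := by
    intro r hr
    have hD := H.dom r (hI r hr)
    have hk := hD.kato hL.le
    obtain ⟨c0, c1, c2, c3, _, _, _, _, _, _⟩ := hD
    rw [← intervalIntegral.integral_const_mul, ← intervalIntegral.integral_const_mul,
      ← intervalIntegral.integral_sub (ii_of_cont hL.le (by fun_prop))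
      (ii_of_cont hL.le (by fun_prop)), ← sub_eq_zero,
      ← intervalIntegral.integral_sub (ii_of_cont hL.le (by fun_prop))
      (ii_of_cont hL.le (by fun_prop))]
    have : ∀ x, Z r x ^ 2 + Z1 r x ^ 2 - (4 / 3 * Z r x ^ 2 -
        1 / 3 * (x * (2 * Z r x * -(Z1 r x + Z3 r x)))) =
        (-2 / 3) * (x * (Z r x * (Z1 r x + Z3 r x)) + Z r x ^ 2 / 2 - 3 / 2 * Z1 r x ^ 2) := by
      intro x; ring
    simp_rw [this]
    rw [intervalIntegral.integral_const_mul, hk, mul_zero]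
  have hEi : IntervalIntegrable (fun r => ∫ x in (0:ℝ)..L, (Z r x) ^ 2) volume s t :=
    H.cont_E.intervalIntegrable _ _
  have e1 : ∫ r in s..t, ∫ x in (0:ℝ)..L, ((Z r x) ^ 2 + (Z1 r x) ^ 2) =
      4 / 3 * (∫ r in s..t, ∫ x in (0:ℝ)..L, (Z r x) ^ 2) -
        1 / 3 * ∫ r in s..t, ∫ x in (0:ℝ)..L, x * (2 * Z r x * -(Z1 r x + Z3 r x)) := by
    rw [← intervalIntegral.integral_const_mul, ← intervalIntegral.integral_const_mul,
      ← intervalIntegral.integral_sub (hEi.const_mul _) (hii.const_mul _)]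
    refine intervalIntegral.integral_congr fun r hr => ?_
    rw [uIcc_of_le hst] at hr
    exact hpt r hr
  have e2 : ∫ r in s..t, ∫ x in (0:ℝ)..L, (Z r x) ^ 2 ≤ ∫ r in s..t, E0 :=
    intervalIntegral.integral_mono_on hst hEi intervalIntegrable_const
      fun r hr => H.energy hL (hI r hr)
  rw [intervalIntegral.integral_const, smul_eq_mul] at e2
  have e3 : 0 ≤ ∫ x in (0:ℝ)..L, x * (Z t x) ^ 2 :=
    intervalIntegral.integral_nonneg hL.le fun x hx => mul_nonneg hx.1 (sq_nonneg _)
  have e4 : ∫ x in (0:ℝ)..L, x * (Z s x) ^ 2 ≤ L * E0 := by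
    have := H.contr s
    calc _ ≤ ∫ x in (0:ℝ)..L, L * (Z s x) ^ 2 := by
          refine intervalIntegral.integral_mono_on hL.le (ii_of_cont hL.le (by fun_prop))
            (ii_of_cont hL.le (by fun_prop)) fun x hx => ?_
          exact mul_le_mul_of_nonneg_right hx.2 (sq_nonneg _)
      _ = L * ∫ x in (0:ℝ)..L, (Z s x) ^ 2 := intervalIntegral.integral_const_mul _ _
      _ ≤ L * E0 := mul_le_mul_of_nonneg_left (H.energy hL (hI s ⟨le_rfl, hst⟩)) hL.le
  rw [e1, heq]
  have e5 : (t - s) * E0 ≤ T * E0 := mul_le_mul_of_nonneg_right (by linarith) hE0n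
  linarith

lemma KdVSys.final (hL : 0 < L) (hT : 0 < T) (H : KdVSys L T Z Z1 Z2 Z3) :
    ∫ r in (0:ℝ)..T, ∫ x in (0:ℝ)..L, ((Z r x) ^ 2 + (Z1 r x) ^ 2) ≤
      (4 * T + L) / 3 * ∫ x in (0:ℝ)..L, (Z 0 x) ^ 2 := by
  have hE0n : 0 ≤ ∫ x in (0:ℝ)..L, (Z 0 x) ^ 2 :=
    intervalIntegral.integral_nonneg hL.le fun _ _ => sq_nonneg _
  by_cases hi : IntervalIntegrable (fun r => ∫ x in (0:ℝ)..L, ((Z r x) ^ 2 + (Z1 r x) ^ 2))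
      volume 0 T
  swap
  · rw [intervalIntegral.integral_undef hi]
    positivity
  set I : ℝ → ℝ := fun r => ∫ x in (0:ℝ)..L, ((Z r x) ^ 2 + (Z1 r x) ^ 2) with hIdef
  have hi' : IntegrableOn I (uIcc 0 T) := by
    rw [uIcc_of_le hT.le, integrableOn_Icc_iff_integrableOn_Ioc]
    exact (intervalIntegrable_iff_integrableOn_Ioc_of_le hT.le).1 hi
  have hc := intervalIntegral.continuousOn_primitive_interval hi'
  rw [uIcc_of_le hT.le] at hc
  set F : ℝ → ℝ := fun x => ∫ r in (0:ℝ)..x, I r with hF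
  -- approximate from inside
  have hlim : ∀ c : ℝ → ℝ, Continuous c → (∀ q ∈ Ioo (0:ℝ) (1 / 2), c q ∈ Icc 0 T) →
      c 0 ∈ Icc 0 T →
      Filter.Tendsto (fun q => F (c q)) (nhdsWithin 0 (Ioi 0)) (nhds (F (c 0))) := by
    intro c hcc hm h0
    refine (hc (c 0) h0).tendsto.comp ?_
    refine tendsto_nhdsWithin_of_tendsto_nhds_of_eventually_within _
      (hcc.continuousAt.tendsto.mono_left nhdsWithin_le_nhds) ?_
    filter_upwards [Ioo_mem_nhdsGT (by norm_num : (0:ℝ) < 1 / 2)] with q hq using hm q hq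
  have l1 := hlim (fun q => T * (1 - q)) (by fun_prop)
    (fun q hq => ⟨by nlinarith [hq.1, hq.2], by nlinarith [hq.1, hq.2]⟩) (by simp [hT.le])
  have l2 := hlim (fun q => T * q) (by fun_prop)
    (fun q hq => ⟨by nlinarith [hq.1, hq.2], by nlinarith [hq.1, hq.2]⟩) (by simp [hT.le])
  have l3 := l1.sub l2
  simp only [sub_zero, mul_one, mul_zero] at l3
  have hF0 : F 0 = 0 := by simp [hF]
  rw [hF0, sub_zero] at l3
  refine le_of_tendsto l3 ?_
  filter_upwards [Ioo_mem_nhdsGT (by norm_num : (0:ℝ) < 1 / 2)] with q hq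
  have a1 : 0 < T * q := mul_pos hT hq.1
  have a2 : T * q ≤ T * (1 - q) := mul_le_mul_of_nonneg_left (by linarith [hq.2]) hT.le
  have a3 : T * (1 - q) < T := by nlinarith [hq.1]
  have hsub : ∀ y, 0 ≤ y → y ≤ T → IntervalIntegrable I volume 0 y := fun y h0 h1 =>
    hi.mono_set (by rw [uIcc_of_le h0, uIcc_of_le hT.le]; exact Icc_subset_Icc_right h1)
  have := intervalIntegral.integral_interval_sub_left (hsub _ (a1.le.trans a2) a3.le)
    (hsub _ a1.le (a2.trans a3.le))
  simp only [hF]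
  rw [this]
  exact H.inner hL a1 a2 a3

end

/-- Kato smoothing effect: a classical solution of the linearized KdV
system with initial datum `z₀` satisfies
`‖z‖_{L²(0,T;H¹(0,L))} ≤ ((4T + L)/3)^{1/2} ‖z₀‖_{L²(0,L)}`, where
`‖z‖²_{L²(0,T;H¹(0,L))} = ∫₀ᵀ ∫₀ᴸ (z(t,x)² + z_x(t,x)²) dx dt`. -/
theorem linearKdV_kato_smoothing (L T : ℝ) (hL : 0 < L) (hT : 0 < T)
    (z : ℝ → ℝ → ℝ) (hz : IsLinearKdVSol L T z)
    (z₀ : ℝ → ℝ) (hinit : ∀ x ∈ Icc (0:ℝ) L, z 0 x = z₀ x) :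
    Real.sqrt (∫ t in (0:ℝ)..T, ∫ x in (0:ℝ)..L,
        ((z t x) ^ 2 + (derivWithin (z t) (Icc (0:ℝ) L) x) ^ 2))
      ≤ Real.sqrt ((4 * T + L) / 3) * L2norm L z₀ := by
  obtain ⟨hC3, hC1, hcont, heq, hbc⟩ := hz
  have hUL := uniqueDiffOn_Icc hL
  have hUT := uniqueDiffOn_Icc hT
  set Z : ℝ → ℝ → ℝ := fun t x => z (max 0 (min T t)) (max 0 (min L x)) with hZ
  have hcl : ∀ {M y : ℝ}, y ∈ Icc 0 M → max 0 (min M y) = y := fun {M y} hy => by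
    rw [min_eq_right hy.2, max_eq_right hy.1]
  have hclm : ∀ {M : ℝ} (y : ℝ), 0 < M → max 0 (min M y) ∈ Icc 0 M := fun {M} y hM =>
    ⟨le_max_left _ _, max_le hM.le (min_le_left _ _)⟩
  have hZz : ∀ t ∈ Icc 0 T, ∀ x ∈ Icc 0 L, Z t x = z t x := fun t ht x hx => by
    simp only [hZ, hcl ht, hcl hx]
  have H : KdVSys L T Z (fun t => derivWithin (z t) (Icc 0 L))
      (fun t => iteratedDerivWithin 2 (z t) (Icc 0 L))
      (fun t => iteratedDerivWithin 3 (z t) (Icc 0 L)) := by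
    have hdt : ∀ t ∈ Ioo 0 T, ∀ x ∈ Ioo 0 L,
        derivWithin (fun s => z s x) (Icc (0:ℝ) T) t =
          -(derivWithin (z t) (Icc 0 L) x + iteratedDerivWithin 3 (z t) (Icc 0 L) x) :=
      fun t ht x hx => by linarith [heq t ht x hx]
    refine ⟨?_, ?_, ?_, ?_⟩
    · have : Continuous fun p : ℝ × ℝ => ((max 0 (min T p.1), max 0 (min L p.2)) : ℝ × ℝ) := by
        fun_prop
      exact hcont.comp_continuous this fun p => ⟨hclm _ hT, hclm _ hL⟩
    · intro t ht
      have ht' : t ∈ Icc 0 T := ⟨ht.1.le, ht.2.le⟩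
      have h3 := hC3 t ht'
      have hd : ∀ m : ℕ, m < 3 → ∀ x ∈ Ioo 0 L, HasDerivAt (iteratedDerivWithin m (z t) (Icc 0 L))
          (iteratedDerivWithin (m + 1) (z t) (Icc 0 L) x) x := by
        intro m hm x hx
        have h1 := h3.differentiableOn_iteratedDerivWithin (m := m) (by exact_mod_cast hm) hUL x
          ⟨hx.1.le, hx.2.le⟩
        have h2 := h1.hasDerivWithinAt.hasDerivAt (Icc_mem_nhds hx.1 hx.2)
        rwa [iteratedDerivWithin_succ]
      have hc : ∀ m : ℕ, m ≤ 3 → ContinuousOn (iteratedDerivWithin m (z t) (Icc 0 L)) (Icc 0 L) :=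
        fun m hm => h3.continuousOn_iteratedDerivWithin (by exact_mod_cast hm) hUL
      have e1 : iteratedDerivWithin 1 (z t) (Icc 0 L) = derivWithin (z t) (Icc 0 L) :=
        iteratedDerivWithin_one
      refine ⟨?_, ?_, hc 2 (by norm_num), hc 3 le_rfl, ?_, ?_, hd 2 (by norm_num), ?_, ?_, ?_⟩
      · exact h3.continuousOn.congr fun x hx => hZz t ht' x hx
      · rw [← e1]; exact hc 1 (by norm_num)
      · intro x hx
        have h := hd 0 (by norm_num) x hx
        rw [zero_add, e1, iteratedDerivWithin_zero] at h
        refine h.congr_of_eventuallyEq ?_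
        filter_upwards [Icc_mem_nhds hx.1 hx.2] with y hy
        exact hZz t ht' y hy
      · rw [← e1]; exact hd 1 (by norm_num)
      · rw [hZz t ht' 0 ⟨le_rfl, hL.le⟩]; exact (hbc t ht').1
      · rw [hZz t ht' L ⟨hL.le, le_rfl⟩]; exact (hbc t ht').2.1
      · exact (hbc t ht').2.2
    · intro t ht x hx
      have hx' : x ∈ Icc 0 L := ⟨hx.1.le, hx.2.le⟩
      rw [← hdt t ht x hx]
      have h1 := ((hC1 x hx').differentiableOn (by norm_num) t
        ⟨ht.1.le, ht.2.le⟩).hasDerivWithinAt.hasDerivAt (Icc_mem_nhds ht.1 ht.2)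
      refine h1.congr_of_eventuallyEq ?_
      filter_upwards [Icc_mem_nhds ht.1 ht.2] with r hr
      exact hZz r hr x hx'
    · intro x hx
      have hx' : x ∈ Icc 0 L := ⟨hx.1.le, hx.2.le⟩
      have h1 := ((hC1 x hx').continuousOn_derivWithin hUT le_rfl).neg.mono Ioo_subset_Icc_self
      refine h1.congr fun t ht => ?_
      have := hdt t ht x hx
      rw [Pi.neg_apply]
      linarith
  have hE0 : ∫ x in (0:ℝ)..L, (Z 0 x) ^ 2 = ∫ x in (0:ℝ)..L, (z₀ x) ^ 2 := by
    refine intervalIntegral.integral_congr fun x hx => ?_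
    rw [uIcc_of_le hL.le] at hx
    rw [hZz 0 ⟨le_rfl, hT.le⟩ x hx, hinit x hx]
  have key := H.final hL hT
  rw [hE0] at key
  have hIeq : ∫ t in (0:ℝ)..T, ∫ x in (0:ℝ)..L,
        ((z t x) ^ 2 + (derivWithin (z t) (Icc (0:ℝ) L) x) ^ 2) =
      ∫ t in (0:ℝ)..T, ∫ x in (0:ℝ)..L,
        ((Z t x) ^ 2 + (derivWithin (z t) (Icc (0:ℝ) L) x) ^ 2) := by
    refine intervalIntegral.integral_congr fun t ht => ?_
    rw [uIcc_of_le hT.le] at ht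
    refine intervalIntegral.integral_congr fun x hx => ?_
    rw [uIcc_of_le hL.le] at hx
    rw [hZz t ht x hx]
  rw [hIeq, L2norm, ← Real.sqrt_mul (by positivity)]
  exact Real.sqrt_le_sqrt key
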